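/- arXiv:1012.1838 — 2 statements merged into one kernel-verified Lean document; each statement's English description precedes it below -/
import Mathlib

section
/- Let K be a field with at least 13 elements and S a smooth cubic surface in P^3 over K. Suppose S contains a pair of skew lines ℓ_1 and ℓ_2 both defined over K. Then Span(ℓ_1(K) ∪ ℓ_2(K)) = S(K). -/
/- Common framework: points, lines, intersection divisors, the secant-tangent span,
the groups `H_S(K)`, geometric notions over the algebraic closure, and topologies. -/

open MvPolynomial

noncomputable section

namespace CubicSurf

variable {K L : Type*} [Field K] [Field L] {n : ℕ}

/-- The set of `K`-rational points of the projective hypersurface `F = 0`. -/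
def zeroSet (F : MvPolynomial (Fin n) K) : Set (Projectivization K (Fin n → K)) :=
  {P | eval P.rep F = 0}

/-- The binary form obtained by restricting `F` to the line spanned by `u` and `v`,
via the parametrization `(s : t) ↦ s • u + t • v`. -/
def lineRestrict (F : MvPolynomial (Fin n) K) (u v : Fin n → K) : MvPolynomial (Fin 2) K :=
  aeval (fun i => C (u i) * X 0 + C (v i) * X 1) F

/-- A projective line: a 2-dimensional linear subspace of `K^n`. -/
def IsLine (W : Submodule K (Fin n → K)) : Prop := Module.finrank K W = 2

/-- The line `W` lies (geometrically) on the hypersurface `F = 0`. -/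
def LineOnSurf (F : MvPolynomial (Fin n) K) (W : Submodule K (Fin n → K)) : Prop :=
  ∀ u v : Fin n → K, u ∈ W → v ∈ W → lineRestrict F u v = 0

/-- The projective point `P` lies on the line `W`. -/
def OnLine (W : Submodule K (Fin n → K)) (P : Projectivization K (Fin n → K)) : Prop :=
  P.rep ∈ W

/-- The set of `K`-points of the line `W`. -/
def linePts (W : Submodule K (Fin n → K)) : Set (Projectivization K (Fin n → K)) :=
  {P | OnLine W P}

/-- `ℓ · S = P + Q + R`: the intersection divisor (with multiplicities) of the line `W`
with the hypersurface `F = 0` is `P + Q + R`. -/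
def MeetsIn (F : MvPolynomial (Fin n) K) (W : Submodule K (Fin n → K))
    (P Q R : Projectivization K (Fin n → K)) : Prop :=
  ∃ (u v : Fin n → K) (_ : u ∈ W) (_ : v ∈ W) (_ : LinearIndependent K ![u, v])
    (c : K) (l m : Fin 3 → K) (h : ∀ k, l k • u + m k • v ≠ 0),
      c ≠ 0 ∧
      lineRestrict F u v = C c * ∏ k : Fin 3, (C (m k) * X 0 - C (l k) * X 1) ∧
      Projectivization.mk K _ (h 0) = P ∧
      Projectivization.mk K _ (h 1) = Q ∧
      Projectivization.mk K _ (h 2) = R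

/-- Membership in the span of a set of points under the secant/tangent process:
the smallest subset of `S(K)` containing `B` such that whenever `P`, `Q` are in it and a
`K`-line `ℓ ⊄ S` satisfies `ℓ·S = P+Q+R` with `R ∈ S(K)`, then `R` is in it. -/
inductive SpanMem (F : MvPolynomial (Fin n) K) (B : Set (Projectivization K (Fin n → K))) :
    Projectivization K (Fin n → K) → Prop
  | base (P : Projectivization K (Fin n → K)) (hP : P ∈ B) : SpanMem F B P
  | secant (P Q R : Projectivization K (Fin n → K)) (W : Submodule K (Fin n → K))
      (hW : IsLine W) (hWS : ¬ LineOnSurf F W) (hP : SpanMem F B P) (hQ : SpanMem F B Q)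
      (hR : R ∈ zeroSet F) (hm : MeetsIn F W P Q R) : SpanMem F B R

/-- The span of a set of points under the secant/tangent process. -/
def Span (F : MvPolynomial (Fin n) K) (B : Set (Projectivization K (Fin n → K))) :
    Set (Projectivization K (Fin n → K)) :=
  {P | SpanMem F B P}

/-- Smoothness of the projective hypersurface `F = 0`: over the algebraic closure there is
no nonzero common zero of `F` and all of its partial derivatives. -/
def IsSmoothHypersurf (F : MvPolynomial (Fin n) K) : Prop :=
  ∀ v : Fin n → AlgebraicClosure K,
    eval v (MvPolynomial.map (algebraMap K (AlgebraicClosure K)) F) = 0 →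
    (∀ i, eval v (pderiv i (MvPolynomial.map (algebraMap K (AlgebraicClosure K)) F)) = 0) →
    v = 0

/-- A smooth cubic hypersurface. -/
def SmoothCubic (F : MvPolynomial (Fin n) K) : Prop :=
  F.IsHomogeneous 3 ∧ IsSmoothHypersurf F

/-- The linear form cutting out the tangent plane `Π_P` of `F = 0` at `P`,
evaluated at the representative of a point `Q`; `Q ∈ Π_P` iff this vanishes. -/
def tangentEval (F : MvPolynomial (Fin n) K) (P Q : Projectivization K (Fin n → K)) : K :=
  ∑ i, eval P.rep (pderiv i F) * Q.rep i

/-- The set of `K`-points of the tangent plane `Π_P`. -/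
def tangentPlanePts (F : MvPolynomial (Fin n) K) (P : Projectivization K (Fin n → K)) :
    Set (Projectivization K (Fin n → K)) :=
  {Q | tangentEval F P Q = 0}

/-- The set of `K`-points of `Γ_P = S ∩ Π_P`. -/
def GammaPts (F : MvPolynomial (Fin n) K) (P : Projectivization K (Fin n → K)) :
    Set (Projectivization K (Fin n → K)) :=
  zeroSet F ∩ tangentPlanePts F P

/-! ### Base change along a field embedding -/

/-- Base change of a vector along a field embedding. -/
def clVec (φ : K →+* L) (v : Fin n → K) : Fin n → L := fun i => φ (v i)

lemma clVec_ne_zero (φ : K →+* L) {v : Fin n → K} (hv : v ≠ 0) : clVec φ v ≠ 0 := by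
  intro h
  apply hv
  funext i
  have := congrFun h i
  simpa [clVec] using φ.injective (by simpa [clVec] using this)

/-- Base change of a projective point along a field embedding. -/
def clPt (φ : K →+* L) (P : Projectivization K (Fin n → K)) :
    Projectivization L (Fin n → L) :=
  Projectivization.mk L (clVec φ P.rep) (clVec_ne_zero φ P.rep_nonzero)

lemma eval_smul_of_isHomogeneous {R : Type*} [CommSemiring R] {F : MvPolynomial (Fin n) R}
    {d : ℕ} (hF : F.IsHomogeneous d) (a : R) (w : Fin n → R) :
    eval (a • w) F = a ^ d * eval w F := by
  classical
  rw [eval_eq', eval_eq', Finset.mul_sum]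
  refine Finset.sum_congr rfl fun s hs => ?_
  have hdeg : ∑ i, s i = d := by
    have h1 := hF (MvPolynomial.mem_support_iff.mp hs)
    rw [Finsupp.weight_apply] at h1
    rw [← h1, Finsupp.sum_fintype]
    · simp
    · intro i; simp
  have key : ∀ i : Fin n, (a • w) i ^ s i = a ^ s i * w i ^ s i := by
    intro i; simp [mul_pow]
  rw [Finset.prod_congr rfl (fun i _ => key i), Finset.prod_mul_distrib,
    Finset.prod_pow_eq_pow_sum, hdeg]
  ring

lemma clVec_eval (φ : K →+* L) (F : MvPolynomial (Fin n) K) (v : Fin n → K) :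
    eval (clVec φ v) (MvPolynomial.map φ F) = φ (eval v F) := by
  rw [eval_map]
  have h : φ (eval v F) = φ (eval₂Hom (RingHom.id K) v F) := rfl
  rw [h, map_eval₂Hom]
  rfl

/-- A point given by a vector on which a homogeneous `F` vanishes lies in the zero set. -/
lemma mk_mem_zeroSet {F : MvPolynomial (Fin n) K} {d : ℕ} (hF : F.IsHomogeneous d)
    {v : Fin n → K} (hv : v ≠ 0) (h : eval v F = 0) :
    Projectivization.mk K v hv ∈ zeroSet F := by
  obtain ⟨a, ha⟩ := Projectivization.exists_smul_eq_mk_rep K v hv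
  show eval (Projectivization.mk K v hv).rep F = 0
  have hrep : (Projectivization.mk K v hv).rep = (a : K) • v := by
    rw [← ha, Units.smul_def]
  rw [hrep, eval_smul_of_isHomogeneous hF, h, mul_zero]

lemma clPt_mem_zeroSet (φ : K →+* L) {F : MvPolynomial (Fin n) K} {d : ℕ}
    (hF : F.IsHomogeneous d) {P : Projectivization K (Fin n → K)} (hP : P ∈ zeroSet F) :
    clPt φ P ∈ zeroSet (MvPolynomial.map φ F) := by
  apply mk_mem_zeroSet (hF.map φ)
  rw [clVec_eval, hP, map_zero]

/-- The induced map on points of `S` under base change of the field. -/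
def ptMap (φ : K →+* L) {F : MvPolynomial (Fin n) K} {d : ℕ} (hF : F.IsHomogeneous d)
    (P : zeroSet F) : zeroSet (MvPolynomial.map φ F) :=
  ⟨clPt φ P.1, clPt_mem_zeroSet φ hF P.2⟩

/-- A subspace of `L^n` is defined over `K` (w.r.t. `φ : K →+* L`) if it is spanned by
the base change of a `K`-subspace. -/
def DefinedOver (φ : K →+* L) (W : Submodule L (Fin n → L)) : Prop :=
  ∃ W₀ : Submodule K (Fin n → K), W = Submodule.span L (clVec φ '' (W₀ : Set (Fin n → K)))

/-! ### Asymptotic lines, parabolic points, Eckardt points -/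

/-- The line `W` is asymptotic to `F = 0` at `P`: the intersection multiplicity
`(ℓ · S)_P` is at least 3. -/
def AsymptoticAt (F : MvPolynomial (Fin n) K) (W : Submodule K (Fin n → K))
    (P : Projectivization K (Fin n → K)) : Prop :=
  IsLine W ∧ P.rep ∈ W ∧
    ∃ v ∈ W, LinearIndependent K ![P.rep, v] ∧
      ∃ c : K, lineRestrict F P.rep v = C c * (X 1) ^ 3

/-- The set of asymptotic lines at `P`. -/
def AsymSet (F : MvPolynomial (Fin n) K) (P : Projectivization K (Fin n → K)) :
    Set (Submodule K (Fin n → K)) :=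
  {W | AsymptoticAt F W P}

/-- A point of a hypersurface is parabolic (relative to the given field) if it does
not have exactly two distinct asymptotic lines (i.e. it has one or infinitely many). -/
def ParabolicAt (F : MvPolynomial (Fin n) K) (P : Projectivization K (Fin n → K)) : Prop :=
  ¬ ∃ W₁ W₂ : Submodule K (Fin n → K), W₁ ≠ W₂ ∧ AsymSet F P = {W₁, W₂}

/-- An Eckardt point (relative to the given field): three distinct lines lying on the
surface pass through `P`. -/
def EckardtAt (F : MvPolynomial (Fin n) K) (P : Projectivization K (Fin n → K)) : Prop :=
  ∃ W₁ W₂ W₃ : Submodule K (Fin n → K), W₁ ≠ W₂ ∧ W₁ ≠ W₃ ∧ W₂ ≠ W₃ ∧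
    (∀ W ∈ ({W₁, W₂, W₃} : Set (Submodule K (Fin n → K))),
      IsLine W ∧ LineOnSurf F W ∧ OnLine W P)

section geometric

variable (F : MvPolynomial (Fin n) K)

/-- `F` base changed to the algebraic closure of `K`. -/
def clF : MvPolynomial (Fin n) (AlgebraicClosure K) :=
  MvPolynomial.map (algebraMap K (AlgebraicClosure K)) F

/-- A `K`-point of `S` is parabolic (a geometric notion, checked over `K̄`). -/
def IsParabolic (P : Projectivization K (Fin n → K)) : Prop :=
  ParabolicAt (clF F) (clPt (algebraMap K (AlgebraicClosure K)) P)

/-- A `K`-point of `S` is an Eckardt point (a geometric notion, checked over `K̄`). -/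
def IsEckardt (P : Projectivization K (Fin n → K)) : Prop :=
  EckardtAt (clF F) (clPt (algebraMap K (AlgebraicClosure K)) P)

/-- A `K`-point of `S` is `K`-hyperbolic: it has exactly two asymptotic lines over `K̄`,
and both are defined over `K`. -/
def IsHyperbolic (P : Projectivization K (Fin n → K)) : Prop :=
  ∃ W₁ W₂, W₁ ≠ W₂ ∧
    AsymSet (clF F) (clPt (algebraMap K (AlgebraicClosure K)) P) = {W₁, W₂} ∧
    DefinedOver (algebraMap K (AlgebraicClosure K)) W₁ ∧
    DefinedOver (algebraMap K (AlgebraicClosure K)) W₂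

/-- A `K`-point of `S` is `K`-ternary: at least one of the asymptotic lines of `S`
through `P` is defined over `K`. -/
def IsTernary (P : Projectivization K (Fin n → K)) : Prop :=
  ∃ W ∈ AsymSet (clF F) (clPt (algebraMap K (AlgebraicClosure K)) P),
    DefinedOver (algebraMap K (AlgebraicClosure K)) W

end geometric

/-! ### The group `H_S(K)` -/

variable (F : MvPolynomial (Fin n) K)

/-- `G_S(K)`: the free abelian group on the set `S(K)`. -/
abbrev GS := FreeAbelianGroup (zeroSet F)

/-- The degree homomorphism `G_S(K) → ℤ`, `Σ aᵢ Pᵢ ↦ Σ aᵢ`. -/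
def degHom : GS F →+ ℤ := FreeAbelianGroup.lift fun _ => (1 : ℤ)

/-- `P + Q + R` is a "three point sum": either cut out on `S` with multiplicity by a
`K`-line not contained in `S`, or `P`, `Q`, `R` all lie on a `K`-line contained in `S`. -/
def TripleRel (P Q R : zeroSet F) : Prop :=
  ∃ W : Submodule K (Fin n → K), IsLine W ∧
    ((¬ LineOnSurf F W ∧ MeetsIn F W P.1 Q.1 R.1) ∨
      (LineOnSurf F W ∧ OnLine W P.1 ∧ OnLine W Q.1 ∧ OnLine W R.1))

/-- `G'_S(K)`: the subgroup generated by all three point sums. -/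
def Gp : AddSubgroup (GS F) :=
  AddSubgroup.closure {x | ∃ P Q R : zeroSet F, TripleRel F P Q R ∧
    x = FreeAbelianGroup.of P + FreeAbelianGroup.of Q + FreeAbelianGroup.of R}

/-- `G''_S(K)`: the degree-0 part of `G'_S(K)`. -/
def Gpp : AddSubgroup (GS F) := Gp F ⊓ (degHom F).ker

/-- `H_S(K) = G_S(K)/G''_S(K)`. -/
abbrev HS := GS F ⧸ Gpp F

/-- The class `[P] ∈ H_S(K)` of a point `P ∈ S(K)`. -/
def HClass (P : zeroSet F) : HS F := QuotientAddGroup.mk' (Gpp F) (FreeAbelianGroup.of P)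

/-- The degree homomorphism `H_S(K) → ℤ`. -/
def HdegHom : HS F →+ ℤ :=
  QuotientAddGroup.lift (Gpp F) (degHom F) (fun _ hx => hx.2)

/-- `H⁰_S(K)`: the degree-0 part of `H_S(K)`. -/
def H0 : AddSubgroup (HS F) := (HdegHom F).ker

@[simp] lemma HdegHom_HClass (P : zeroSet F) : HdegHom F (HClass F P) = 1 := by
  simp [HdegHom, HClass, degHom]

/-- The class `[P] - [Q]`, as an element of `H⁰_S(K)`. -/
def H0diff (P Q : zeroSet F) : H0 F :=
  ⟨HClass F P - HClass F Q, by simp [H0, AddMonoidHom.mem_ker, map_sub]⟩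

/-! ### mod-`p` dimensions and torsion -/

/-- `A/pA` for an abelian group `A`. -/
abbrev ModP (p : ℕ) (A : Type*) [AddCommGroup A] : Type _ :=
  A ⧸ (AddMonoidHom.range (nsmulAddMonoidHom p : A →+ A))

instance ModP.instModule (p : ℕ) (A : Type*) [AddCommGroup A] : Module (ZMod p) (ModP p A) :=
  QuotientAddGroup.zmodModule (fun x => ⟨x, rfl⟩)

/-- `dim_{F_p} A/pA`. -/
def dimModP (p : ℕ) (A : Type*) [AddCommGroup A] : Cardinal := Module.rank (ZMod p) (ModP p A)

/-- The `k`-torsion subgroup `A[k]` of an abelian group `A`. -/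
def torsion (k : ℕ) (A : Type*) [AddCommGroup A] : AddSubgroup A :=
  (nsmulAddMonoidHom k : A →+ A).ker

instance torsion.instModule (k : ℕ) (A : Type*) [AddCommGroup A] :
    Module (ZMod k) (torsion k A) :=
  AddCommGroup.zmodModule (fun x => Subtype.ext x.2)

/-- `dim_{F_k} A[k]`: the dimension of the `k`-torsion subgroup (for `k` prime). -/
def dimTorsion (k : ℕ) (A : Type*) [AddCommGroup A] : Cardinal :=
  Module.rank (ZMod k) (torsion k A)

/-! ### Topologies -/

/-- The quotient topology on projective space induced by the topology of `K`. -/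
def projTop (K : Type*) [Field K] [TopologicalSpace K] (n : ℕ) :
    TopologicalSpace (Projectivization K (Fin n → K)) :=
  TopologicalSpace.coinduced
    (fun v : {v : Fin n → K // v ≠ 0} => Projectivization.mk K v.1 v.2) inferInstance

/-- The induced topology on the set of `K`-points of `S`. -/
def surfTop (F : MvPolynomial (Fin n) K) [TopologicalSpace K] :
    TopologicalSpace (zeroSet F) :=
  TopologicalSpace.induced Subtype.val (projTop K n)

/-- `K` (a topological field) is a local field: it is isomorphic, as a topological field,
to `ℝ`, to `ℂ`, or to a finite extension of `ℚ_p` for some prime `p` (with its canonical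
topology, namely the `ℚ_p`-vector space topology). -/
def IsLocalField (K : Type*) [Field K] [TopologicalSpace K] : Prop :=
  (∃ e : K ≃+* ℝ, IsHomeomorph e) ∨ (∃ e : K ≃+* ℂ, IsHomeomorph e) ∨
    (∃ (p : ℕ), p.Prime ∧ ∃ (_ : Fact p.Prime) (f : ℚ_[p] →+* K) (m : ℕ)
      (e : K ≃+ (Fin m → ℚ_[p])),
      (∀ (c : ℚ_[p]) (x : K), e (f c * x) = c • e x) ∧ IsHomeomorph e)

end CubicSurf

/-!
Write a point `P` of the surface as `a + b` with `a` on the first line and `b` on the second. If the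
line `ab` is not contained in the surface, then `P` is its third intersection point. If it is, the
tangent plane at `P` does not contain both given lines; say it does not contain `ℓ₁`. The plane
through `ℓ₁` and `b` then cuts the surface in `ℓ₁`, the line `ab` and a residual line that does not
pass through `P`, and that is not `ℓ₁` because, by smoothness, no plane is tangent along the whole
of `ℓ₁`. A point `R` of the residual line off `ℓ₁` and `ab` is the third point of a line joining `b`
to a point of `ℓ₁`, and the line `PR` meets `ℓ₁` in a third point, so `P` is obtained from `R`.
-/

namespace CubicSurf

section LinearAlgebra

variable {K : Type*} [Field K]

lemma linearIndependent_pair_of_apply_ne_zero {V : Type*} [AddCommGroup V] [Module K V]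
    {f : V →ₗ[K] K} {x y : V} (hx₀ : x ≠ 0) (hx : f x = 0) (hy : f y ≠ 0) :
    LinearIndependent K ![x, y] := by
  rw [LinearIndependent.pair_iff' hx₀]
  rintro c rfl
  exact hy (by rw [map_smul, hx, smul_zero])

lemma eq_zero_of_smul_add_smul_eq_zero {n : ℕ} {L : Type*} [Field L] [Algebra K L] {u v : Fin n → K}
    (huv : LinearIndependent K ![u, v]) {x y : L} (h : (fun i => u i • x + v i • y) = 0) :
    x = 0 ∧ y = 0 := by
  have huv' := linearIndependent_algebraMap_comp_iff (S := L).mpr huv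
  have hsum : ∑ k, ![x, y] k • (algebraMap K L ∘ ![u, v] k) = 0 := by
    rw [← h]
    ext i
    simp [Algebra.smul_def, mul_comm]
  have hxy := Fintype.linearIndependent_iff.mp huv' ![x, y] hsum
  exact ⟨hxy 0, hxy 1⟩

lemma exists_binaryQuadratic_eq_zero [IsAlgClosed K] (a b c : K) :
    ∃ x y : K, (x ≠ 0 ∨ y ≠ 0) ∧ a * x ^ 2 + b * (x * y) + c * y ^ 2 = 0 := by
  by_cases ha : a = 0
  · exact ⟨1, 0, Or.inl one_ne_zero, by simp [ha]⟩
  · obtain ⟨x, hx⟩ := IsAlgClosed.exists_root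
      (Polynomial.C a * Polynomial.X ^ 2 + Polynomial.C b * Polynomial.X + Polynomial.C c)
      (by rw [Polynomial.degree_quadratic ha]; exact two_ne_zero)
    exact ⟨x, 1, Or.inr one_ne_zero, by simpa using hx⟩

lemma exists_ne_zero_mul_add_mul_eq {α γ δ : K} (h : α ≠ 0 ∨ γ ≠ 0) (hδ : δ ≠ 0) :
    ∃ x z : K, z ≠ 0 ∧ α * x + γ * z = δ := by
  by_cases hα : α = 0
  · have hγ : γ ≠ 0 := h.resolve_left (not_not.mpr hα)
    exact ⟨0, δ / γ, div_ne_zero hδ hγ, by rw [mul_zero, zero_add, mul_div_cancel₀ _ hγ]⟩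
  · exact ⟨(δ - γ) / α, 1, one_ne_zero, by rw [mul_div_cancel₀ _ hα]; ring⟩

end LinearAlgebra

section Homogeneous

variable {σ R : Type*} [CommRing R]

@[elab_as_elim]
lemma isHomogeneous_succ_induction {d : ℕ} {motive : MvPolynomial σ R → Prop}
    (linear_mul : ∀ l G, l.IsHomogeneous 1 → G.IsHomogeneous d → motive (l * G))
    (add : ∀ F G, motive F → motive G → motive (F + G))
    {F : MvPolynomial σ R} (hF : F.IsHomogeneous (d + 1)) : motive F := by
  have hmem : F ∈ homogeneousSubmodule σ R 1 * homogeneousSubmodule σ R d := by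
    rwa [← homogeneousSubmodule_one_pow (σ := σ) (R := R) (n := d), ← pow_succ',
      homogeneousSubmodule_one_pow]
  exact Submodule.mul_induction_on hmem (fun l hl G hG => linear_mul l G hl hG) add

variable [Fintype σ]

/-- The directional derivative `∂_v = ∑ i, v i • ∂/∂x_i`, linear in the direction `v`. -/
def dirDeriv : (σ → R) →ₗ[R] Derivation R (MvPolynomial σ R) (MvPolynomial σ R) :=
  Fintype.linearCombination R pderiv

lemma dirDeriv_apply (v : σ → R) (F : MvPolynomial σ R) :
    dirDeriv v F = ∑ i, v i • pderiv i F := by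
  rw [dirDeriv, Fintype.linearCombination_apply, ← Derivation.coeFnAddMonoidHom_apply, map_sum,
    Finset.sum_apply]
  rfl

@[simp]
lemma dirDeriv_X (v : σ → R) (i : σ) : dirDeriv v (X i) = C (v i) := by
  classical
  simp [dirDeriv_apply, pderiv_X, Pi.single_apply, smul_eq_C_mul]

lemma isHomogeneous_dirDeriv {F : MvPolynomial σ R} {d : ℕ} (hF : F.IsHomogeneous d)
    (v : σ → R) : (dirDeriv v F).IsHomogeneous (d - 1) := by
  rw [dirDeriv_apply]
  refine IsHomogeneous.sum _ _ _ fun i _ => ?_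
  rw [smul_eq_C_mul]
  exact hF.pderiv.C_mul _

lemma dirDeriv_of_isHomogeneous_one {l : MvPolynomial σ R} (hl : l.IsHomogeneous 1)
    (v : σ → R) : dirDeriv v l = C (eval v l) := by
  rw [← mem_homogeneousSubmodule, homogeneousSubmodule_one_eq_span_X] at hl
  induction hl using Submodule.span_induction with
  | mem l hl => obtain ⟨i, rfl⟩ := hl; simp
  | zero => simp
  | add l m _ _ hl hm => simp [hl, hm]
  | smul r l _ hl => simp [hl, smul_eq_C_mul]

/-- The differential of `F` at a point `p` with coordinates in an `R`-algebra, as a linear form;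
for a point `p` of the hypersurface `F = 0` its kernel is the tangent space at `p`. -/
def tangentForm {A : Type*} [CommRing A] [Algebra R A] (F : MvPolynomial σ R) (p : σ → A) :
    (σ → R) →ₗ[R] A :=
  Fintype.linearCombination R fun i => aeval p (pderiv i F)

lemma tangentForm_apply {A : Type*} [CommRing A] [Algebra R A] (F : MvPolynomial σ R) (p : σ → A)
    (v : σ → R) : tangentForm F p v = aeval p (dirDeriv v F) := by
  simp [tangentForm, dirDeriv_apply, Fintype.linearCombination_apply]

lemma eval_dirDeriv (F : MvPolynomial σ R) (p v : σ → R) :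
    eval p (dirDeriv v F) = tangentForm F p v := by
  rw [tangentForm_apply, aeval_eq_eval]

end Homogeneous

section LineRestrict

variable {K : Type*} [Field K] {n : ℕ} {F : MvPolynomial (Fin n) K} {u v : Fin n → K}

lemma aeval_lineRestrict {A : Type*} [CommRing A] [Algebra K A] (F : MvPolynomial (Fin n) K)
    (u v : Fin n → K) (x y : A) :
    aeval ![x, y] (lineRestrict F u v) = aeval (fun i => u i • x + v i • y) F := by
  rw [lineRestrict, comp_aeval_apply]
  congr! 2 with i
  simp [Algebra.smul_def]

lemma aeval_eq_zero_of_lineRestrict_eq_zero {A : Type*} [CommRing A] [Algebra K A]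
    (h : lineRestrict F u v = 0) (x y : A) : aeval (fun i => u i • x + v i • y) F = 0 := by
  rw [← aeval_lineRestrict, h, map_zero]

lemma eval_lineRestrict (F : MvPolynomial (Fin n) K) (u v : Fin n → K) (x y : K) :
    eval ![x, y] (lineRestrict F u v) = eval (x • u + y • v) F := by
  have h := aeval_lineRestrict F u v x y
  rw [aeval_eq_eval, aeval_eq_eval] at h
  rw [h]
  congr! 2
  ext i
  simp [mul_comm]

lemma dirDeriv_lineRestrict (F : MvPolynomial (Fin n) K) (u v : Fin n → K) (c : Fin 2 → K) :
    dirDeriv c (lineRestrict F u v) = lineRestrict (dirDeriv (c 0 • u + c 1 • v) F) u v := by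
  have hX (i : Fin n) : dirDeriv c (C (u i) * X 0 + C (v i) * X 1) =
      C ((c 0 • u + c 1 • v) i) := by
    simp [mul_comm]
  unfold lineRestrict
  generalize c 0 • u + c 1 • v = w at hX ⊢
  induction F using MvPolynomial.induction_on with
  | C a => simp
  | add F G hF hG => simp only [map_add, hF, hG]
  | mul_X F i hF =>
    simp only [map_mul, map_add, aeval_X, Derivation.leibniz, hF, smul_eq_mul, dirDeriv_X, algHom_C,
      algebraMap_eq, ← hX]

lemma lineRestrict_dirDeriv_eq_zero {w : Fin n → K} (h : lineRestrict F u v = 0)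
    (hw : w ∈ Submodule.span K {u, v}) : lineRestrict (dirDeriv w F) u v = 0 := by
  obtain ⟨x, y, rfl⟩ := Submodule.mem_span_pair.mp hw
  simpa [h] using (dirDeriv_lineRestrict F u v ![x, y]).symm

lemma eval_eq_zero_of_lineRestrict_eq_zero {p : Fin n → K} (h : lineRestrict F u v = 0)
    (hp : p ∈ Submodule.span K {u, v}) : eval p F = 0 := by
  obtain ⟨x, y, rfl⟩ := Submodule.mem_span_pair.mp hp
  rw [← eval_lineRestrict, h, map_zero]

lemma tangentForm_eq_zero_of_lineRestrict_eq_zero {p w : Fin n → K} (h : lineRestrict F u v = 0)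
    (hp : p ∈ Submodule.span K {u, v}) (hw : w ∈ Submodule.span K {u, v}) :
    tangentForm F p w = 0 := by
  rw [← eval_dirDeriv]
  exact eval_eq_zero_of_lineRestrict_eq_zero (lineRestrict_dirDeriv_eq_zero h hw) hp

lemma lineRestrict_of_isHomogeneous_one (hF : F.IsHomogeneous 1) (u v : Fin n → K) :
    lineRestrict F u v = C (eval u F) * X 0 + C (eval v F) * X 1 := by
  rw [← mem_homogeneousSubmodule, homogeneousSubmodule_one_eq_span_X] at hF
  unfold lineRestrict
  induction hF using Submodule.span_induction with
  | mem l hl => obtain ⟨i, rfl⟩ := hl; simp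
  | zero => simp
  | add l m _ _ hl hm => simp only [map_add, hl, hm]; ring
  | smul r l _ hl => simp only [hl, smul_eq_C_mul, map_mul, eval_C, algHom_C, algebraMap_eq]; ring

lemma lineRestrict_of_isHomogeneous_two (hF : F.IsHomogeneous 2) (u v : Fin n → K) :
    lineRestrict F u v = C (eval u F) * X 0 ^ 2 + C (tangentForm F u v) * (X 0 * X 1) +
      C (eval v F) * X 1 ^ 2 := by
  refine isHomogeneous_succ_induction (fun l G hl hG => ?_) (fun F G hF hG => ?_) hF
  · have hmul : lineRestrict (l * G) u v = lineRestrict l u v * lineRestrict G u v := map_mul ..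
    rw [hmul, lineRestrict_of_isHomogeneous_one hl, lineRestrict_of_isHomogeneous_one hG,
      ← eval_dirDeriv]
    simp only [Derivation.leibniz, dirDeriv_of_isHomogeneous_one hl,
      dirDeriv_of_isHomogeneous_one hG, smul_eq_mul, map_add, map_mul, eval_C]
    ring
  · have hadd : lineRestrict (F + G) u v = lineRestrict F u v + lineRestrict G u v := map_add ..
    rw [hadd, hF, hG]
    simp only [← eval_dirDeriv, map_add]
    ring

lemma eval_smul_add_smul_of_isHomogeneous_two (hF : F.IsHomogeneous 2) (u v : Fin n → K) (x y : K) :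
    eval (x • u + y • v) F = eval u F * x ^ 2 + tangentForm F u v * (x * y) + eval v F * y ^ 2 := by
  simp [← eval_lineRestrict, lineRestrict_of_isHomogeneous_two hF]

lemma tangentForm_comm_of_isHomogeneous_two (hF : F.IsHomogeneous 2) (u v : Fin n → K) :
    tangentForm F u v = tangentForm F v u := by
  have huv := eval_smul_add_smul_of_isHomogeneous_two hF u v 1 1
  have hvu := eval_smul_add_smul_of_isHomogeneous_two hF v u 1 1
  rw [add_comm, huv] at hvu
  linear_combination hvu

lemma lineRestrict_of_isHomogeneous_three (hF : F.IsHomogeneous 3) (u v : Fin n → K) :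
    lineRestrict F u v = C (eval u F) * X 0 ^ 3 + C (tangentForm F u v) * (X 0 ^ 2 * X 1) +
      C (tangentForm F v u) * (X 0 * X 1 ^ 2) + C (eval v F) * X 1 ^ 3 := by
  refine isHomogeneous_succ_induction (fun l G hl hG => ?_) (fun F G hF hG => ?_) hF
  · have hmul : lineRestrict (l * G) u v = lineRestrict l u v * lineRestrict G u v := map_mul ..
    rw [hmul, lineRestrict_of_isHomogeneous_one hl, lineRestrict_of_isHomogeneous_two hG]
    simp only [← eval_dirDeriv, Derivation.leibniz, dirDeriv_of_isHomogeneous_one hl, smul_eq_mul,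
      map_add, map_mul, eval_C]
    rw [eval_dirDeriv G v u, tangentForm_comm_of_isHomogeneous_two hG v u, ← eval_dirDeriv]
    ring
  · have hadd : lineRestrict (F + G) u v = lineRestrict F u v + lineRestrict G u v := map_add ..
    rw [hadd, hF, hG]
    simp only [← eval_dirDeriv, map_add]
    ring

lemma eval_add_of_isHomogeneous_three (hF : F.IsHomogeneous 3) (u v : Fin n → K) :
    eval (u + v) F = eval u F + tangentForm F u v + tangentForm F v u + eval v F := by
  simpa [lineRestrict_of_isHomogeneous_three hF] using (eval_lineRestrict F u v 1 1).symm

lemma tangentForm_smul {d : ℕ} (hF : F.IsHomogeneous (d + 1)) (c : K) (p w : Fin n → K) :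
    tangentForm F (c • p) w = c ^ d * tangentForm F p w := by
  rw [← eval_dirDeriv, ← eval_dirDeriv,
    eval_smul_of_isHomogeneous (isHomogeneous_dirDeriv hF w), Nat.add_sub_cancel]

lemma tangentForm_self_of_eval_eq_zero (hF : F.IsHomogeneous 3) {p : Fin n → K}
    (hp : eval p F = 0) : tangentForm F p p = 0 := by
  have h := congrArg (eval p) hF.sum_X_mul_pderiv
  simpa [hp, ← eval_dirDeriv, dirDeriv_apply, smul_eq_C_mul] using h

end LineRestrict

section Smooth

variable {K : Type*} [Field K] {n : ℕ} {F : MvPolynomial (Fin n) K}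

lemma IsSmoothHypersurf.eq_zero (hF : IsSmoothHypersurf F) {p : Fin n → AlgebraicClosure K}
    (hp : aeval p F = 0) (htan : tangentForm F p = 0) : p = 0 := by
  have heval (G : MvPolynomial (Fin n) K) :
      eval p (map (algebraMap K (AlgebraicClosure K)) G) = aeval p G := by
    rw [eval_map, aeval_def]
  refine hF p (by rw [heval, hp]) fun i => ?_
  rw [pderiv_map, heval]
  simpa [tangentForm, Fintype.linearCombination_apply_single] using
    DFunLike.congr_fun htan (Pi.single i 1)

lemma IsSmoothHypersurf.tangentForm_ne_zero (hF : IsSmoothHypersurf F) {p : Fin n → K}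
    (hp₀ : p ≠ 0) (hp : eval p F = 0) : tangentForm F p ≠ 0 := by
  intro htan
  let φ := algebraMap K (AlgebraicClosure K)
  have haeval (G : MvPolynomial (Fin n) K) : aeval (clVec φ p) G = φ (eval p G) := by
    rw [← aeval_eq_eval]
    exact aeval_algebraMap_apply ..
  refine clVec_ne_zero φ hp₀ (hF.eq_zero (by rw [haeval, hp, map_zero]) ?_)
  refine LinearMap.ext fun w => ?_
  rw [tangentForm_apply, haeval, eval_dirDeriv, htan, LinearMap.zero_apply, map_zero,
    LinearMap.zero_apply]

/-- No plane is tangent along a whole line on a smooth cubic surface: the tangent forms along the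
line would be multiples of a single form by a binary quadratic, and the quadratic has a zero over
the algebraic closure. -/
lemma SmoothCubic.lineRestrict_dirDeriv_ne_zero (hF : SmoothCubic F) {u v b b' : Fin n → K}
    (huv : LinearIndependent K ![u, v]) (hline : lineRestrict F u v = 0)
    (htop : Submodule.span K {u, v} ⊔ Submodule.span K {b, b'} = ⊤) :
    lineRestrict (dirDeriv b F) u v ≠ 0 := by
  intro hb
  let φ := algebraMap K (AlgebraicClosure K)
  obtain ⟨x, y, hxy, hzero⟩ := exists_binaryQuadratic_eq_zero (φ (eval u (dirDeriv b' F)))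
    (φ (tangentForm (dirDeriv b' F) u v)) (φ (eval v (dirDeriv b' F)))
  have hb' : aeval (fun i => u i • x + v i • y) (dirDeriv b' F) = 0 := by
    rw [← aeval_lineRestrict, lineRestrict_of_isHomogeneous_two (isHomogeneous_dirDeriv hF.1 b')]
    simpa using hzero
  have htan : tangentForm F (fun i => u i • x + v i • y) = 0 := by
    refine LinearMap.ker_eq_top.mp (top_unique (htop ▸ sup_le (fun w hw => ?_)
      (Submodule.span_le.mpr (Set.pair_subset ?_ ?_))))
    · exact (tangentForm_apply ..).trans (aeval_eq_zero_of_lineRestrict_eq_zero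
        (lineRestrict_dirDeriv_eq_zero hline hw) x y)
    · exact (tangentForm_apply ..).trans (aeval_eq_zero_of_lineRestrict_eq_zero hb x y)
    · exact (tangentForm_apply ..).trans hb'
  obtain ⟨hx, hy⟩ := eq_zero_of_smul_add_smul_eq_zero huv
    (hF.2.eq_zero (aeval_eq_zero_of_lineRestrict_eq_zero hline x y) htan)
  exact hxy.elim (· hx) (· hy)

end Smooth

section Lines

variable {K : Type*} [Field K] {n : ℕ} {F : MvPolynomial (Fin n) K}
  {W : Submodule K (Fin n → K)}

lemma isLine_span_pair {u v : Fin n → K} (huv : LinearIndependent K ![u, v]) :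
    IsLine (Submodule.span K {u, v}) := by
  rw [IsLine, ← Matrix.range_cons_cons_empty, finrank_span_eq_card huv, Fintype.card_fin]

lemma IsLine.eq_span_pair (hW : IsLine W) {u v : Fin n → K} (hu : u ∈ W) (hv : v ∈ W)
    (huv : LinearIndependent K ![u, v]) : W = Submodule.span K {u, v} :=
  (Submodule.eq_of_le_of_finrank_eq (Submodule.span_le.mpr (Set.pair_subset hu hv))
    ((isLine_span_pair huv).trans hW.symm)).symm

lemma IsLine.exists_eq_span_pair (hW : IsLine W) {u : Fin n → K} (hu : u ∈ W) (hu₀ : u ≠ 0) :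
    ∃ v, W = Submodule.span K {u, v} := by
  obtain ⟨⟨v, hv⟩, huv⟩ := exists_linearIndependent_pair_of_one_lt_finrank
    (R := K) (M := W) (x := ⟨u, hu⟩) (by rw [hW]; exact one_lt_two) (by simpa using hu₀)
  refine ⟨v, hW.eq_span_pair hu hv ?_⟩
  rw [LinearIndependent.pair_iff] at huv ⊢
  simpa [Subtype.ext_iff] using huv

lemma LineOnSurf.eval_eq_zero (hW : LineOnSurf F W) {p : Fin n → K} (hp : p ∈ W) :
    eval p F = 0 :=
  eval_eq_zero_of_lineRestrict_eq_zero (hW p p hp hp) (Submodule.subset_span (by simp))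

lemma LineOnSurf.tangentForm_eq_zero (hW : LineOnSurf F W) {p w : Fin n → K} (hp : p ∈ W)
    (hw : w ∈ W) : tangentForm F p w = 0 :=
  tangentForm_eq_zero_of_lineRestrict_eq_zero (hW p w hp hw)
    (Submodule.subset_span (by simp)) (Submodule.subset_span (by simp))

end Lines

section Secants

variable {K : Type*} [Field K] {n : ℕ} {F : MvPolynomial (Fin n) K}
  {B : Set (Projectivization K (Fin n → K))}

lemma mk_mem_zeroSet_iff {d : ℕ} (hF : F.IsHomogeneous d) {v : Fin n → K} (hv : v ≠ 0) :
    Projectivization.mk K v hv ∈ zeroSet F ↔ eval v F = 0 := by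
  refine ⟨fun h => ?_, mk_mem_zeroSet hF hv⟩
  obtain ⟨a, ha⟩ := Projectivization.exists_smul_eq_mk_rep K v hv
  rw [zeroSet, Set.mem_ofPred_eq, ← ha, Units.smul_def, eval_smul_of_isHomogeneous hF] at h
  exact (mul_eq_zero.mp h).resolve_left (pow_ne_zero d a.ne_zero)

lemma span_subset_zeroSet (hB : B ⊆ zeroSet F) : Span F B ⊆ zeroSet F := by
  rintro P (⟨_, hP⟩ | ⟨_, _, _, _, _, _, _, _, hR, _⟩)
  · exact hB hP
  · exact hR

/-- The affine cone over the span of `B`: the vectors representing a point of `Span F B`, together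
with the origin. -/
def spanCone (F : MvPolynomial (Fin n) K) (B : Set (Projectivization K (Fin n → K))) :
    Set (Fin n → K) :=
  {v | ∀ hv : v ≠ 0, Projectivization.mk K v hv ∈ Span F B}

lemma mem_spanCone_of_linePts_subset {W : Submodule K (Fin n → K)} (hWB : linePts W ⊆ B)
    {v : Fin n → K} (hv : v ∈ W) : v ∈ spanCone F B := by
  intro hv₀
  obtain ⟨a, ha⟩ := Projectivization.exists_smul_eq_mk_rep K v hv₀
  refine SpanMem.base _ (hWB ?_)
  rw [linePts, Set.mem_ofPred_eq, OnLine, ← ha]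
  exact W.smul_mem _ hv

lemma eval_eq_zero_of_mem_spanCone (hF : F.IsHomogeneous 3) (hB : B ⊆ zeroSet F) {v : Fin n → K}
    (hv : v ∈ spanCone F B) (hv₀ : v ≠ 0) : eval v F = 0 :=
  (mk_mem_zeroSet_iff hF hv₀).mp (span_subset_zeroSet hB (hv hv₀))

lemma meetsIn_of_eval_add_eq_zero (hF : F.IsHomogeneous 3) {p q : Fin n → K}
    (hpq : LinearIndependent K ![p, q]) (hp : eval p F = 0) (hq : eval q F = 0)
    (hadd : eval (p + q) F = 0) (htan : tangentForm F p q ≠ 0)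
    (hp₀ : p ≠ 0) (hq₀ : q ≠ 0) (hpq₀ : p + q ≠ 0) :
    MeetsIn F (Submodule.span K {p, q}) (Projectivization.mk K p hp₀) (Projectivization.mk K q hq₀)
      (Projectivization.mk K (p + q) hpq₀) := by
  have hsymm : tangentForm F q p = -tangentForm F p q := by
    rw [eval_add_of_isHomogeneous_three hF, hp, hq] at hadd
    linear_combination hadd
  refine ⟨p, q, Submodule.subset_span (by simp), Submodule.subset_span (by simp), hpq,
    -tangentForm F p q, ![1, 0, 1], ![0, 1, 1], ?_, neg_ne_zero.mpr htan, ?_, ?_, ?_, ?_⟩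
  · simpa [Fin.forall_fin_succ] using ⟨hp₀, hq₀, hpq₀⟩
  · rw [lineRestrict_of_isHomogeneous_three hF, hp, hq, hsymm]
    simp [Fin.prod_univ_three]
    ring
  all_goals simp

lemma add_mem_spanCone (hF : F.IsHomogeneous 3) (hB : B ⊆ zeroSet F) {p q : Fin n → K}
    (hp : p ∈ spanCone F B) (hq : q ∈ spanCone F B) (hadd : eval (p + q) F = 0)
    (htan : tangentForm F p q ≠ 0) : p + q ∈ spanCone F B := by
  intro hpq₀
  have hp₀ : p ≠ 0 := by
    rintro rfl
    exact htan (by simpa using tangentForm_smul hF 0 0 q)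
  have hq₀ : q ≠ 0 := by
    rintro rfl
    exact htan (map_zero _)
  have hFp := eval_eq_zero_of_mem_spanCone hF hB hp hp₀
  have hFq := eval_eq_zero_of_mem_spanCone hF hB hq hq₀
  have hpq : LinearIndependent K ![p, q] :=
    linearIndependent_pair_of_apply_ne_zero hp₀ (tangentForm_self_of_eval_eq_zero hF hFp) htan
  have hnot : ¬ LineOnSurf F (Submodule.span K {p, q}) := fun hW =>
    htan (hW.tangentForm_eq_zero (Submodule.subset_span (by simp))
      (Submodule.subset_span (by simp)))
  exact SpanMem.secant _ _ _ _ (isLine_span_pair hpq) hnot (hp hp₀) (hq hq₀)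
    (mk_mem_zeroSet hF hpq₀ hadd) (meetsIn_of_eval_add_eq_zero hF hpq hFp hFq hadd htan ..)

end Secants

/-- `W₁` and `W₂` are skew lines contained in the surface `F = 0` of `ℙ³`. -/
structure SkewLinesOn {K : Type*} [Field K] (F : MvPolynomial (Fin 4) K)
    (W₁ W₂ : Submodule K (Fin 4 → K)) : Prop where
  isLine_left : IsLine W₁
  isLine_right : IsLine W₂
  lineOnSurf_left : LineOnSurf F W₁
  lineOnSurf_right : LineOnSurf F W₂
  inf_eq_bot : W₁ ⊓ W₂ = ⊥

namespace SkewLinesOn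

variable {K : Type*} [Field K] {F : MvPolynomial (Fin 4) K} {W₁ W₂ : Submodule K (Fin 4 → K)}
  {a a' b : Fin 4 → K}

lemma symm (h : SkewLinesOn F W₁ W₂) : SkewLinesOn F W₂ W₁ :=
  ⟨h.isLine_right, h.isLine_left, h.lineOnSurf_right, h.lineOnSurf_left,
    inf_comm W₂ W₁ ▸ h.inf_eq_bot⟩

lemma sup_eq_top (h : SkewLinesOn F W₁ W₂) : W₁ ⊔ W₂ = ⊤ := by
  apply Submodule.eq_top_of_finrank_eq
  have hdim := Submodule.finrank_sup_add_finrank_inf_eq W₁ W₂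
  rw [h.isLine_left, h.isLine_right, h.inf_eq_bot, finrank_bot] at hdim
  simpa using hdim

lemma linePts_subset_zeroSet (h : SkewLinesOn F W₁ W₂) :
    linePts W₁ ∪ linePts W₂ ⊆ zeroSet F :=
  Set.union_subset (fun _ => h.lineOnSurf_left.eval_eq_zero)
    (fun _ => h.lineOnSurf_right.eval_eq_zero)

lemma lineRestrict_eq_zero (h : SkewLinesOn F W₁ W₂) (hF : F.IsHomogeneous 3) (ha : a ∈ W₁)
    (hb : b ∈ W₂) (hadd : eval (a + b) F = 0) (hab : tangentForm F a b = 0) :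
    lineRestrict F a b = 0 := by
  have hFa := h.lineOnSurf_left.eval_eq_zero ha
  have hFb := h.lineOnSurf_right.eval_eq_zero hb
  rw [eval_add_of_isHomogeneous_three hF, hFa, hFb, hab] at hadd
  have hba : tangentForm F b a = 0 := by simpa using hadd
  simp [lineRestrict_of_isHomogeneous_three hF, hFa, hFb, hab, hba]

lemma tangentForm_right_ne_zero (h : SkewLinesOn F W₁ W₂) (hF : SmoothCubic F)
    (hW₁ : W₁ = Submodule.span K {a, a'}) (hb : b ∈ W₂) (hb₀ : b ≠ 0)
    (hba : tangentForm F b a = 0) : tangentForm F b a' ≠ 0 := by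
  intro hba'
  refine hF.2.tangentForm_ne_zero hb₀ (h.lineOnSurf_right.eval_eq_zero hb) ?_
  refine LinearMap.ker_eq_top.mp (top_unique (h.sup_eq_top ▸ sup_le ?_ fun w hw => ?_))
  · exact hW₁ ▸ Submodule.span_le.mpr (Set.pair_subset hba hba')
  · exact h.lineOnSurf_right.tangentForm_eq_zero hb hw

/-- When the line `ab` lies on the surface, the plane spanned by `W₁` and `b` cuts the surface in
`W₁`, the line `ab` and a residual line; the point `a + b + q` lies on the residual line. -/
lemma exists_tangentForm_add_eq_zero (h : SkewLinesOn F W₁ W₂) (hF : SmoothCubic F) (ha : a ∈ W₁)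
    (ha₀ : a ≠ 0) (hb : b ∈ W₂) (hb₀ : b ≠ 0) (hline : lineRestrict F a b = 0)
    (ha'W : a' ∈ W₁) (ha' : tangentForm F (a + b) a' ≠ 0) :
    ∃ q ∈ W₁, tangentForm F (a + b) q + tangentForm F q b = 0 ∧ tangentForm F b q ≠ 0 ∧
      tangentForm F q b ≠ 0 := by
  have hmem_a : a ∈ Submodule.span K {a, b} := Submodule.subset_span (by simp)
  have hmem_b : b ∈ Submodule.span K {a, b} := Submodule.subset_span (by simp)
  have hPa := tangentForm_eq_zero_of_lineRestrict_eq_zero hline (add_mem hmem_a hmem_b) hmem_a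
  have hab := tangentForm_eq_zero_of_lineRestrict_eq_zero hline hmem_a hmem_b
  have hba := tangentForm_eq_zero_of_lineRestrict_eq_zero hline hmem_b hmem_a
  have hind := linearIndependent_pair_of_apply_ne_zero ha₀ hPa ha'
  have hW₁ := h.isLine_left.eq_span_pair ha ha'W hind
  have hba' := h.tangentForm_right_ne_zero hF hW₁ hb hb₀ hba
  obtain ⟨b', hW₂⟩ := h.isLine_right.exists_eq_span_pair hb hb₀
  let Q := dirDeriv b F
  have hQ : Q.IsHomogeneous 2 := isHomogeneous_dirDeriv hF.1 b
  have hQ_ne : tangentForm Q a a' ≠ 0 ∨ eval a' Q ≠ 0 := by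
    by_contra! hzero
    refine hF.lineRestrict_dirDeriv_ne_zero hind (h.lineOnSurf_left a a' ha ha'W)
      (hW₁ ▸ hW₂ ▸ h.sup_eq_top) (?_ : lineRestrict Q a a' = 0)
    simp [lineRestrict_of_isHomogeneous_two hQ, hzero, Q, eval_dirDeriv, hab]
  obtain ⟨x, z, hz, hxz⟩ := exists_ne_zero_mul_add_mul_eq hQ_ne (neg_ne_zero.mpr ha')
  have hPq : tangentForm F (a + b) (x • a + z • a') = z * tangentForm F (a + b) a' := by
    simp [hPa]
  have hqb : tangentForm F (x • a + z • a') b = -(z * tangentForm F (a + b) a') := by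
    rw [← eval_dirDeriv, eval_smul_add_smul_of_isHomogeneous_two hQ, eval_dirDeriv F a b, hab]
    linear_combination z * hxz
  refine ⟨x • a + z • a', add_mem (W₁.smul_mem x ha) (W₁.smul_mem z ha'W), ?_, ?_, ?_⟩
  · rw [hPq, hqb, add_neg_cancel]
  · simp [hba, hz, hba']
  · rw [hqb]
    exact neg_ne_zero.mpr (mul_ne_zero hz ha')

lemma add_mem_spanCone_of_tangentForm_ne_zero (h : SkewLinesOn F W₁ W₂) (hF : SmoothCubic F)
    (ha : a ∈ W₁) (ha₀ : a ≠ 0) (hb : b ∈ W₂) (hb₀ : b ≠ 0) (hline : lineRestrict F a b = 0)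
    (ha'W : a' ∈ W₁) (ha' : tangentForm F (a + b) a' ≠ 0) :
    a + b ∈ spanCone F (linePts W₁ ∪ linePts W₂) := by
  obtain ⟨q, hq, hsum, hbq, hqb⟩ :=
    h.exists_tangentForm_add_eq_zero hF ha ha₀ hb hb₀ hline ha'W ha'
  have hmem_a : a ∈ Submodule.span K {a, b} := Submodule.subset_span (by simp)
  have hmem_b : b ∈ Submodule.span K {a, b} := Submodule.subset_span (by simp)
  have hP : eval (a + b) F = 0 :=
    eval_eq_zero_of_lineRestrict_eq_zero hline (add_mem hmem_a hmem_b)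
  have hba := tangentForm_eq_zero_of_lineRestrict_eq_zero hline hmem_b hmem_a
  have hqa : tangentForm F q a = 0 := h.lineOnSurf_left.tangentForm_eq_zero hq ha
  have hqq : tangentForm F q q = 0 := h.lineOnSurf_left.tangentForm_eq_zero hq hq
  have hR : eval (b + (a + q)) F = 0 := by
    rw [← add_assoc, add_comm b a, eval_add_of_isHomogeneous_three hF.1, hP,
      h.lineOnSurf_left.eval_eq_zero hq, map_add (tangentForm F q), hqa]
    linear_combination hsum
  have hR_mem : b + (a + q) ∈ spanCone F (linePts W₁ ∪ linePts W₂) :=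
    add_mem_spanCone hF.1 h.linePts_subset_zeroSet
      (mem_spanCone_of_linePts_subset Set.subset_union_right hb)
      (mem_spanCone_of_linePts_subset Set.subset_union_left (add_mem ha hq)) hR
      (by rwa [map_add, hba, zero_add])
  have hP_eq : a + b = -q + (b + (a + q)) := by abel
  rw [hP_eq]
  refine add_mem_spanCone hF.1 h.linePts_subset_zeroSet
    (mem_spanCone_of_linePts_subset Set.subset_union_left (neg_mem hq)) hR_mem (hP_eq ▸ hP) ?_
  rw [← neg_one_smul K q, tangentForm_smul hF.1]
  simpa [hqa, hqq] using hqb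

lemma exists_tangentForm_ne_zero (h : SkewLinesOn F W₁ W₂) (hF : SmoothCubic F) {p : Fin 4 → K}
    (hp₀ : p ≠ 0) (hp : eval p F = 0) :
    (∃ w ∈ W₁, tangentForm F p w ≠ 0) ∨ ∃ w ∈ W₂, tangentForm F p w ≠ 0 := by
  by_contra! hzero
  exact hF.2.tangentForm_ne_zero hp₀ hp
    (LinearMap.ker_eq_top.mp (top_unique (h.sup_eq_top ▸ sup_le hzero.1 hzero.2)))

lemma mem_spanCone_of_eval_eq_zero (h : SkewLinesOn F W₁ W₂) (hF : SmoothCubic F) {p : Fin 4 → K}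
    (hp : eval p F = 0) : p ∈ spanCone F (linePts W₁ ∪ linePts W₂) := by
  obtain ⟨a, ha, b, hb, rfl⟩ := Submodule.mem_sup.mp (h.sup_eq_top ▸ Submodule.mem_top (x := p))
  have ha_mem : a ∈ spanCone F (linePts W₁ ∪ linePts W₂) :=
    mem_spanCone_of_linePts_subset Set.subset_union_left ha
  have hb_mem : b ∈ spanCone F (linePts W₁ ∪ linePts W₂) :=
    mem_spanCone_of_linePts_subset Set.subset_union_right hb
  rcases eq_or_ne a 0 with rfl | ha₀
  · rwa [zero_add]
  rcases eq_or_ne b 0 with rfl | hb₀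
  · rwa [add_zero]
  by_cases hab : tangentForm F a b = 0
  · have hline := h.lineRestrict_eq_zero hF.1 ha hb hp hab
    intro hp₀
    obtain ⟨a', ha'W, ha'⟩ | ⟨b', hb'W, hb'⟩ := h.exists_tangentForm_ne_zero hF hp₀ hp
    · exact h.add_mem_spanCone_of_tangentForm_ne_zero hF ha ha₀ hb hb₀ hline ha'W ha' hp₀
    · have hba : tangentForm F b a = 0 := tangentForm_eq_zero_of_lineRestrict_eq_zero hline
        (Submodule.subset_span (by simp)) (Submodule.subset_span (by simp))
      have hline' := h.symm.lineRestrict_eq_zero hF.1 hb ha (add_comm a b ▸ hp) hba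
      simp only [add_comm a b, Set.union_comm (linePts W₁)] at hp₀ hb' ⊢
      exact h.symm.add_mem_spanCone_of_tangentForm_ne_zero hF hb hb₀ ha ha₀ hline' hb'W hb' hp₀
  · exact add_mem_spanCone hF.1 h.linePts_subset_zeroSet ha_mem hb_mem hp hab

end SkewLinesOn

end CubicSurf

open CubicSurf MvPolynomial in
theorem span_of_two_skew_lines_general
    {K : Type*} [Field K] (F : MvPolynomial (Fin 4) K) (hF : SmoothCubic F)
    (W₁ W₂ : Submodule K (Fin 4 → K))
    (hl₁ : IsLine W₁) (hl₂ : IsLine W₂)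
    (hS₁ : LineOnSurf F W₁) (hS₂ : LineOnSurf F W₂)
    (hskew : W₁ ⊓ W₂ = ⊥) :
    Span F (linePts W₁ ∪ linePts W₂) = zeroSet F := by
  have h : SkewLinesOn F W₁ W₂ := ⟨hl₁, hl₂, hS₁, hS₂, hskew⟩
  refine (span_subset_zeroSet h.linePts_subset_zeroSet).antisymm fun P hP => ?_
  rw [← P.mk_rep]
  exact h.mem_spanCone_of_eval_eq_zero hF hP P.rep_nonzero

open CubicSurf MvPolynomial in
/-- Let `K` be a field with at least 13 elements and `S` a smooth cubic
surface over `K` containing a pair of skew `K`-lines `ℓ₁`, `ℓ₂`. Then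
`Span(ℓ₁(K) ∪ ℓ₂(K)) = S(K)`. -/
theorem span_of_two_skew_lines
    {K : Type*} [Field K] (hK : 13 ≤ Cardinal.mk K)
    (F : MvPolynomial (Fin 4) K) (hF : SmoothCubic F)
    (W₁ W₂ : Submodule K (Fin 4 → K))
    (hl₁ : IsLine W₁) (hl₂ : IsLine W₂)
    (hS₁ : LineOnSurf F W₁) (hS₂ : LineOnSurf F W₂)
    (hskew : W₁ ⊓ W₂ = ⊥) :
    Span F (linePts W₁ ∪ linePts W₂) = zeroSet F :=
  span_of_two_skew_lines_general F hF W₁ W₂ hl₁ hl₂ hS₁ hS₂ hskew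
end
end

section
/- Let S be a smooth cubic surface in P^3 over a field K and suppose P_0 ∈ S(K) is K-ternary. Let B ⊆ S(K) be such that Span(B) = S(K). Then the set {[P] − [P_0] : P ∈ B} generates the group H^0_S(K). In particular, for any prime p, r(S,K) ≥ dim_{F_p} H^0_S(K)/p H^0_S(K). -/
/- Common framework: points, lines, intersection divisors, the secant-tangent span,
the groups `H_S(K)`, geometric notions over the algebraic closure, and topologies. -/

open MvPolynomial

noncomputable section

/-! If `P₀` is `K`-ternary, an asymptotic line through `P₀` descends to a `K`-line `ℓ`; then
`ℓ · S = 3 P₀` or `ℓ ⊆ S`, so in either case `3 P₀ ∈ G'_S(K)`. Consequently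
`[P] + [Q] + [R] = 3 [P₀]` for every three point sum, that is,
`[R] - [P₀] = -([P] - [P₀]) - ([Q] - [P₀])`, and a subgroup of `H⁰_S(K)` containing `[P] - [P₀]`
for all `P ∈ B` contains it for all `P ∈ Span(B)`. -/

namespace CubicSurf

variable {K L : Type*} [Field K] [Field L] {n : ℕ}

/-! ### Descent of subspaces along a field embedding -/

lemma clVec_mem_span_image (φ : K →+* L) {s : Set (Fin n → K)} {x : Fin n → K}
    (hx : x ∈ Submodule.span K s) : clVec φ x ∈ Submodule.span L (clVec φ '' s) := by
  let clVecHom : (Fin n → K) →ₛₗ[φ] (Fin n → L) :=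
    { toFun := clVec φ
      map_add' := fun _ _ => funext fun _ => map_add φ _ _
      map_smul' := fun _ _ => funext fun _ => map_mul φ _ _ }
  exact Submodule.image_span_subset_span clVecHom s ⟨x, hx, rfl⟩

lemma linearIndependent_clVec {ι : Type*} (φ : K →+* L) {v : ι → Fin n → K}
    (hv : LinearIndependent K v) : LinearIndependent L fun i => clVec φ (v i) := by
  let := φ.toAlgebra
  exact linearIndependent_algebraMap_comp_iff.mpr hv

lemma finrank_span_clVec_image (φ : K →+* L) (s : Set (Fin n → K)) :
    Module.finrank L (Submodule.span L (clVec φ '' s)) =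
      Module.finrank K (Submodule.span K s) := by
  obtain ⟨b, hbs, hspan, hb⟩ := exists_linearIndependent K s
  have := hb.setFinite.fintype
  have hspan' : Submodule.span L (clVec φ '' s) =
      Submodule.span L (Set.range fun i : b => clVec φ i) := by
    rw [← Set.image_eq_range]
    refine le_antisymm (Submodule.span_le.mpr ?_) (Submodule.span_mono (Set.image_mono hbs))
    rintro _ ⟨x, hx, rfl⟩
    exact clVec_mem_span_image φ (hspan ▸ Submodule.subset_span hx)
  rw [hspan', finrank_span_eq_card (linearIndependent_clVec φ hb), ← hspan,
    ← finrank_span_eq_card hb, Subtype.range_coe]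

lemma clVec_mem_span_image_iff (φ : K →+* L) {W : Submodule K (Fin n → K)} {x : Fin n → K} :
    clVec φ x ∈ Submodule.span L (clVec φ '' (W : Set (Fin n → K))) ↔ x ∈ W := by
  refine ⟨fun hx => ?_, fun hx => Submodule.subset_span ⟨x, hx, rfl⟩⟩
  -- Adjoining to `W` a vector whose base change lies in the base change of `W` does not increase
  -- the dimension.
  have hfinrank : Module.finrank K W =
      Module.finrank K (Submodule.span K (insert x (W : Set (Fin n → K)))) := by
    rw [← finrank_span_clVec_image φ, Set.image_insert_eq, Submodule.span_insert_eq_span hx,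
      finrank_span_clVec_image, Submodule.span_eq]
  have hW : W = Submodule.span K (insert x (W : Set (Fin n → K))) :=
    Submodule.eq_of_le_of_finrank_eq
      (fun _ hy => Submodule.subset_span (Set.mem_insert_of_mem x hy)) hfinrank
  exact hW ▸ Submodule.subset_span (Set.mem_insert x _)

lemma isLine_span_clVec_image_iff (φ : K →+* L) {W : Submodule K (Fin n → K)} :
    IsLine (Submodule.span L (clVec φ '' (W : Set (Fin n → K)))) ↔ IsLine W := by
  rw [IsLine, IsLine, finrank_span_clVec_image, Submodule.span_eq]

/-! ### Lines and restrictions of forms to them -/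

lemma IsLine.exists_linearIndependent_pair {W : Submodule K (Fin n → K)} (hW : IsLine W)
    {u : Fin n → K} (hu : u ∈ W) (hu₀ : u ≠ 0) : ∃ v ∈ W, LinearIndependent K ![u, v] := by
  have hone_lt : 1 < Module.finrank K W := by rw [show Module.finrank K W = 2 from hW]; norm_num
  obtain ⟨v, hv⟩ := exists_linearIndependent_pair_of_one_lt_finrank hone_lt
    (x := ⟨u, hu⟩) (Subtype.coe_ne_coe.mp hu₀)
  refine ⟨v, v.2, ?_⟩
  have hcoe : W.subtype ∘ ![⟨u, hu⟩, v] = ![u, v] := by ext i; fin_cases i <;> rfl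
  exact hcoe ▸ hv.map' W.subtype W.ker_subtype

lemma IsLine.span_pair_eq {W : Submodule K (Fin n → K)} (hW : IsLine W) {u v : Fin n → K}
    (hu : u ∈ W) (hv : v ∈ W) (huv : LinearIndependent K ![u, v]) :
    Submodule.span K {u, v} = W := by
  refine Submodule.eq_of_le_of_finrank_eq (Submodule.span_le.mpr (Set.pair_subset hu hv)) ?_
  rw [← Matrix.range_cons_cons_empty u v ![], finrank_span_eq_card huv, Fintype.card_fin, hW]

lemma lineRestrict_comb (F : MvPolynomial (Fin n) K) (u v : Fin n → K) (a b c d : K) :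
    lineRestrict F (a • u + b • v) (c • u + d • v) =
      aeval ![C a * X 0 + C c * X 1, C b * X 0 + C d * X 1] (lineRestrict F u v) := by
  unfold lineRestrict
  rw [← AlgHom.comp_apply, comp_aeval]
  congr 2
  funext i
  simp only [Pi.add_apply, Pi.smul_apply, smul_eq_mul, map_add, map_mul, aeval_C,
    aeval_X, algebraMap_eq, Matrix.cons_val_zero, Matrix.cons_val_one]
  ring

lemma lineRestrict_map (φ : K →+* L) (F : MvPolynomial (Fin n) K) (u v : Fin n → K) :
    lineRestrict (map φ F) (clVec φ u) (clVec φ v) = map φ (lineRestrict F u v) := by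
  unfold lineRestrict
  induction F using MvPolynomial.induction_on with
  | C a => simp only [map_C, aeval_C, algebraMap_eq]
  | add f g hf hg => simp only [map_add, hf, hg]
  | mul_X f i hf => simp only [map_mul, map_add, map_X, map_C, aeval_X, hf]; rfl

lemma lineOnSurf_iff_lineRestrict_eq_zero {F : MvPolynomial (Fin n) K}
    {W : Submodule K (Fin n → K)} (hW : IsLine W) {u v : Fin n → K} (hu : u ∈ W) (hv : v ∈ W)
    (huv : LinearIndependent K ![u, v]) : LineOnSurf F W ↔ lineRestrict F u v = 0 := by
  refine ⟨fun h => h u v hu hv, fun h x y hx hy => ?_⟩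
  rw [← hW.span_pair_eq hu hv huv, Submodule.mem_span_pair] at hx hy
  obtain ⟨a, b, rfl⟩ := hx
  obtain ⟨c, d, rfl⟩ := hy
  rw [lineRestrict_comb, h, map_zero]

lemma lineRestrict_smul_comb_of_eq_C_mul_X_pow {F : MvPolynomial (Fin n) K} {u v : Fin n → K}
    {e : K} {k : ℕ} (h : lineRestrict F u v = C e * X 1 ^ k) (a c d : K) :
    lineRestrict F (a • u) (c • u + d • v) = C (e * d ^ k) * X 1 ^ k := by
  have hcomb := lineRestrict_comb F u v a 0 c d
  rw [zero_smul, add_zero] at hcomb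
  rw [hcomb, h]
  simp only [map_mul, map_pow, aeval_C, aeval_X, algebraMap_eq, Matrix.cons_val_one,
    Matrix.cons_val_fin_one, C_0, zero_mul, zero_add, mul_pow, mul_assoc]

lemma eq_monomial_of_map_eq_monomial {σ R S : Type*} [CommSemiring R] [CommSemiring S]
    {φ : R →+* S} (hφ : Function.Injective φ) {f : MvPolynomial σ R} {s : σ →₀ ℕ} {a : S}
    (h : map φ f = monomial s a) : f = monomial s (coeff s f) := by
  classical
  apply map_injective φ hφ
  rw [map_monomial, ← coeff_map, h, coeff_monomial, if_pos rfl]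

/-! ### Asymptotic lines -/

lemma exists_smul_rep_clPt_eq (φ : K →+* L) (P : Projectivization K (Fin n → K)) :
    ∃ a : L, a • (clPt φ P).rep = clVec φ P.rep :=
  (Projectivization.mk_eq_mk_iff' L _ _ (clVec_ne_zero φ P.rep_nonzero)
    (clPt φ P).rep_nonzero).mp (clPt φ P).mk_rep.symm

lemma asymptoticAt_of_clPt (φ : K →+* L) {F : MvPolynomial (Fin n) K}
    {W : Submodule K (Fin n → K)} {P : Projectivization K (Fin n → K)}
    (h : AsymptoticAt (map φ F) (Submodule.span L (clVec φ '' (W : Set (Fin n → K)))) (clPt φ P)) :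
    AsymptoticAt F W P := by
  obtain ⟨hline, hmem, v, hv, hli, e, he⟩ := h
  obtain ⟨a, ha⟩ := exists_smul_rep_clPt_eq φ P
  have hW : IsLine W := (isLine_span_clVec_image_iff φ).mp hline
  have hP : P.rep ∈ W := (clVec_mem_span_image_iff φ).mp (ha ▸ Submodule.smul_mem _ a hmem)
  obtain ⟨w, hw, hPw⟩ := hW.exists_linearIndependent_pair hP P.rep_nonzero
  obtain ⟨c, d, hcd⟩ : ∃ c d : L, c • (clPt φ P).rep + d • v = clVec φ w := by
    rw [← Submodule.mem_span_pair, hline.span_pair_eq hmem hv hli]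
    exact (clVec_mem_span_image_iff φ).mpr hw
  have hmap : map φ (lineRestrict F P.rep w) = monomial (Finsupp.single 1 3) (e * d ^ 3) := by
    rw [← lineRestrict_map, ← ha, ← hcd, lineRestrict_smul_comb_of_eq_C_mul_X_pow he,
      C_mul_X_pow_eq_monomial]
  exact ⟨hW, hP, w, hw, hPw, _,
    (eq_monomial_of_map_eq_monomial φ.injective hmap).trans C_mul_X_pow_eq_monomial.symm⟩

lemma IsTernary.exists_asymptoticAt {F : MvPolynomial (Fin n) K}
    {P : Projectivization K (Fin n → K)} (h : IsTernary F P) : ∃ W, AsymptoticAt F W P := by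
  obtain ⟨_, hasym, W, rfl⟩ := h
  exact ⟨W, asymptoticAt_of_clPt _ hasym⟩

lemma meetsIn_self_of_lineRestrict_eq {F : MvPolynomial (Fin n) K}
    {W : Submodule K (Fin n → K)} {P : Projectivization K (Fin n → K)} {v : Fin n → K}
    (hP : P.rep ∈ W) (hv : v ∈ W) (hPv : LinearIndependent K ![P.rep, v]) {c : K} (hc : c ≠ 0)
    (h : lineRestrict F P.rep v = C c * X 1 ^ 3) : MeetsIn F W P P P := by
  have hrep : (1 : K) • P.rep + (0 : K) • v = P.rep := by rw [one_smul, zero_smul, add_zero]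
  have hmk (h₀ : (1 : K) • P.rep + (0 : K) • v ≠ 0) : Projectivization.mk K _ h₀ = P := by
    simp only [hrep, P.mk_rep]
  refine ⟨P.rep, v, hP, hv, hPv, -c, fun _ => 1, fun _ => 0,
    fun _ => hrep.trans_ne P.rep_nonzero, neg_ne_zero.mpr hc, ?_, hmk _, hmk _, hmk _⟩
  simp only [h, Fin.prod_univ_three, C_0, C_1, C_neg]
  ring

lemma tripleRel_self_of_asymptoticAt {F : MvPolynomial (Fin n) K} {W : Submodule K (Fin n → K)}
    {P : zeroSet F} (h : AsymptoticAt F W P.1) : TripleRel F P P P := by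
  obtain ⟨hW, hP, v, hv, hPv, c, hc⟩ := h
  have hon := lineOnSurf_iff_lineRestrict_eq_zero (F := F) hW hP hv hPv
  refine ⟨W, hW, ?_⟩
  obtain rfl | hc₀ := eq_or_ne c 0
  · exact .inr ⟨hon.mpr (by rw [hc, C_0, zero_mul]), hP, hP, hP⟩
  · have hne : C c * X 1 ^ 3 ≠ (0 : MvPolynomial (Fin 2) K) :=
      mul_ne_zero (C_ne_zero.mpr hc₀) (pow_ne_zero 3 (X_ne_zero 1))
    exact .inl ⟨fun hF => hne (hc ▸ hon.mp hF),
      meetsIn_self_of_lineRestrict_eq hP hv hPv hc₀ hc⟩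

/-! ### Generating sets of abelian groups -/

lemma range_freeAbelianGroupLift {α A : Type*} [AddCommGroup A] (f : α → A) :
    (FreeAbelianGroup.lift f).range = AddSubgroup.closure (Set.range f) := by
  refine le_antisymm ?_ ((AddSubgroup.closure_le _).mpr ?_)
  · rintro _ ⟨g, rfl⟩
    induction g using FreeAbelianGroup.induction_on with
    | zero => simpa only [map_zero] using zero_mem _
    | of a =>
      rw [FreeAbelianGroup.lift_apply_of]
      exact AddSubgroup.subset_closure (Set.mem_range_self a)
    | neg a ih => simpa only [map_neg] using neg_mem ih
    | add x y hx hy => simpa only [map_add] using add_mem hx hy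
  · rintro _ ⟨a, rfl⟩
    exact ⟨FreeAbelianGroup.of a, FreeAbelianGroup.lift_apply_of f a⟩

lemma dimModP_le_mk_of_closure_eq_top {A : Type*} [AddCommGroup A] {s : Set A}
    (hs : AddSubgroup.closure s = ⊤) (p : ℕ) [Nontrivial (ZMod p)] :
    dimModP p A ≤ Cardinal.mk s := by
  let π : A →+ ModP p A := QuotientAddGroup.mk' _
  have hspan : Submodule.span (ZMod p) (π '' s) = ⊤ := by
    have hle : AddSubgroup.closure s ≤
        (Submodule.span (ZMod p) (π '' s)).toAddSubgroup.comap π :=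
      (AddSubgroup.closure_le _).mpr fun x hx => Submodule.subset_span ⟨x, hx, rfl⟩
    refine (Submodule.eq_top_iff').mpr fun y => ?_
    obtain ⟨x, rfl⟩ := QuotientAddGroup.mk'_surjective _ y
    exact hle (hs ▸ AddSubgroup.mem_top x)
  rw [dimModP, ← rank_top, ← hspan]
  exact (rank_span_le _).trans Cardinal.mk_image_le

/-! ### Generators of `H⁰_S(K)` -/

variable {F : MvPolynomial (Fin n) K}

lemma of_add_of_add_of_mem_Gp {P Q R : zeroSet F} (h : TripleRel F P Q R) :
    FreeAbelianGroup.of P + FreeAbelianGroup.of Q + FreeAbelianGroup.of R ∈ Gp F :=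
  AddSubgroup.subset_closure ⟨P, Q, R, h, rfl⟩

lemma IsTernary.three_nsmul_of_mem_Gp {P : zeroSet F} (h : IsTernary F P.1) :
    3 • FreeAbelianGroup.of P ∈ Gp F := by
  obtain ⟨W, hW⟩ := h.exists_asymptoticAt
  rw [succ_nsmul, two_nsmul]
  exact of_add_of_add_of_mem_Gp (tripleRel_self_of_asymptoticAt hW)

lemma H0diff_add_add_eq_zero {P₀ P Q R : zeroSet F} (hP₀ : 3 • FreeAbelianGroup.of P₀ ∈ Gp F)
    (h : TripleRel F P Q R) : H0diff F P P₀ + H0diff F Q P₀ + H0diff F R P₀ = 0 := by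
  have hmem : FreeAbelianGroup.of P + FreeAbelianGroup.of Q + FreeAbelianGroup.of R -
      3 • FreeAbelianGroup.of P₀ ∈ Gpp F :=
    ⟨(Gp F).sub_mem (of_add_of_add_of_mem_Gp h) hP₀, by simp [degHom]⟩
  have hclass : HClass F P + HClass F Q + HClass F R - 3 • HClass F P₀ = 0 :=
    (QuotientAddGroup.eq_zero_iff _).mpr hmem
  ext
  change HClass F P - HClass F P₀ + (HClass F Q - HClass F P₀) + (HClass F R - HClass F P₀) = 0
  rw [← hclass]
  abel

lemma H0diff_mem_of_spanMem {P₀ : zeroSet F} (hP₀ : 3 • FreeAbelianGroup.of P₀ ∈ Gp F)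
    {B : Set (Projectivization K (Fin n → K))} (hB : B ⊆ zeroSet F) {A : AddSubgroup (H0 F)}
    (hA : ∀ P : zeroSet F, P.1 ∈ B → H0diff F P P₀ ∈ A) {P : Projectivization K (Fin n → K)}
    (hP : SpanMem F B P) : ∃ h : P ∈ zeroSet F, H0diff F ⟨P, h⟩ P₀ ∈ A := by
  induction hP with
  | base P hP => exact ⟨hB hP, hA _ hP⟩
  | secant P Q R W hW hWS _ _ hR hm ihP ihQ =>
    obtain ⟨hP, hPA⟩ := ihP
    obtain ⟨hQ, hQA⟩ := ihQ
    have hsum := H0diff_add_add_eq_zero (P := ⟨P, hP⟩) (Q := ⟨Q, hQ⟩) (R := ⟨R, hR⟩) hP₀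
      ⟨W, hW, .inl ⟨hWS, hm⟩⟩
    exact ⟨hR, eq_neg_of_add_eq_zero_right hsum ▸ neg_mem (add_mem hPA hQA)⟩

lemma coe_lift_H0diff (P₀ : zeroSet F) (g : GS F) :
    (FreeAbelianGroup.lift (fun P => H0diff F P P₀) g : HS F) =
      QuotientAddGroup.mk' (Gpp F) g - degHom F g • HClass F P₀ := by
  induction g using FreeAbelianGroup.induction_on with
  | zero => simp
  | of P => simp [H0diff, HClass, degHom]
  | neg P ih => simp only [map_neg, AddSubgroup.coe_neg, ih, neg_smul]; abel
  | add x y hx hy => simp only [map_add, AddSubgroup.coe_add, hx, hy, add_smul]; abel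

lemma lift_H0diff_surjective (P₀ : zeroSet F) :
    Function.Surjective (FreeAbelianGroup.lift fun P => H0diff F P P₀) := by
  rintro ⟨x, hx⟩
  obtain ⟨g, rfl⟩ := QuotientAddGroup.mk'_surjective (Gpp F) x
  have hdeg : degHom F g = 0 := hx
  exact ⟨g, Subtype.ext (by rw [coe_lift_H0diff, hdeg, zero_smul, sub_zero])⟩

lemma closure_range_H0diff (P₀ : zeroSet F) :
    AddSubgroup.closure (Set.range fun P => H0diff F P P₀) = ⊤ := by
  rw [← range_freeAbelianGroupLift, AddMonoidHom.range_eq_top_of_surjective _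
    (lift_H0diff_surjective P₀)]

lemma closure_H0diff_image_eq_top {P₀ : zeroSet F} (hP₀ : 3 • FreeAbelianGroup.of P₀ ∈ Gp F)
    {B : Set (Projectivization K (Fin n → K))} (hspan : Span F B = zeroSet F) :
    AddSubgroup.closure ((fun P => H0diff F P P₀) '' (Subtype.val ⁻¹' B)) = ⊤ := by
  have hB : B ⊆ zeroSet F := fun P hP => hspan ▸ SpanMem.base P hP
  rw [eq_top_iff, ← closure_range_H0diff P₀, AddSubgroup.closure_le]
  rintro _ ⟨P, rfl⟩
  have hP : SpanMem F B P.1 := hspan.ge P.2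
  exact (H0diff_mem_of_spanMem hP₀ hB
    (fun Q hQ => AddSubgroup.subset_closure (Set.mem_image_of_mem (H0diff F · P₀) hQ)) hP).2

end CubicSurf

open CubicSurf in
theorem ternary_point_generators_general
    {K : Type*} [Field K] {n : ℕ} (F : MvPolynomial (Fin n) K) (P₀ : zeroSet F)
    (hP₀ : 3 • FreeAbelianGroup.of P₀ ∈ Gp F)
    (B : Set (Projectivization K (Fin n → K))) (hspan : Span F B = zeroSet F) :
    AddSubgroup.closure
      {x : HS F | ∃ P : zeroSet F, P.1 ∈ B ∧ x = HClass F P - HClass F P₀}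
      = H0 F ∧
    (∀ q : ℕ, q ≠ 1 → dimModP q (H0 F) ≤ Cardinal.mk B) := by
  have htop := closure_H0diff_image_eq_top hP₀ hspan
  constructor
  · have hgen : {x : HS F | ∃ P : zeroSet F, P.1 ∈ B ∧ x = HClass F P - HClass F P₀} =
        (H0 F).subtype '' ((fun P => H0diff F P P₀) '' (Subtype.val ⁻¹' B)) := by
      rw [Set.image_image]
      exact Set.ext fun x => exists_congr fun P => and_congr_right fun _ => eq_comm
    rw [hgen, ← AddMonoidHom.map_closure, htop, ← AddMonoidHom.range_eq_map,
      AddSubgroup.range_subtype]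
  · intro q hq
    have := ZMod.nontrivial_iff.mpr hq
    exact (dimModP_le_mk_of_closure_eq_top htop q).trans
      (Cardinal.mk_image_le.trans (Cardinal.mk_preimage_of_injective _ B Subtype.val_injective))

open CubicSurf MvPolynomial in
/-- Let `S` be a smooth cubic surface over `K` and `P₀ ∈ S(K)` a
`K`-ternary point. If `B ⊆ S(K)` satisfies `Span(B) = S(K)`, then
`{[P] - [P₀] : P ∈ B}` generates `H⁰_S(K)`; in particular, for any prime `p`,
`r(S,K) ≥ dim_{F_p} H⁰_S(K)/pH⁰_S(K)` (expressed as: the cardinality of any spanning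
set `B` is at least this dimension). -/
theorem ternary_point_generators
    {K : Type*} [Field K]
    (F : MvPolynomial (Fin 4) K) (hF : SmoothCubic F)
    (P₀ : zeroSet F) (hP₀ : IsTernary F P₀.1)
    (B : Set (Projectivization K (Fin 4 → K)))
    (hB : B ⊆ zeroSet F) (hspan : Span F B = zeroSet F) :
    AddSubgroup.closure
      {x : HS F | ∃ P : zeroSet F, P.1 ∈ B ∧ x = HClass F P - HClass F P₀}
      = H0 F ∧
    (∀ q : ℕ, q.Prime → dimModP q (H0 F) ≤ Cardinal.mk B) := by
  have hgen := ternary_point_generators_general F P₀ hP₀.three_nsmul_of_mem_Gp B hspan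
  exact ⟨hgen.1, fun q hq => hgen.2 q hq.ne_one⟩
end
end
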